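/- Let 1 < r, p < ∞ and let {f_k}_k be a sequence of measurable functions on ℝⁿ. Then ‖ ( Σ_k |M f_k|^r )^{1/r} ‖_{L^p(ℝⁿ)} ≤ C_n A_{p,r} ‖ ( Σ_k |f_k|^r )^{1/r} ‖_{L^p(ℝⁿ)}, where A_{p,r} = (r/(r−1)) (p + 1/(p−1)) and C_n depends only on n. -/

import Mathlib

/-!
The proof is by weighted estimates, which keep track of the constants. Throughout, `M` is the
centered maximal function.

*Covering.* Besicovitch's theorem gives `N = N(n)` such that, for arbitrary measures `μ, τ`, if each
point of `S` is the center of a ball `B` with `μ B ≤ τ B`, then `μ S ≤ N τ(univ)` (`besicovitch`).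
Together with Marcinkiewicz interpolation against `L^∞` (`marcinkiewicz`) this yields two weighted
bounds, both with constants of the form `(C_n r / (r - 1)) ^ r`:

* `∫ (M f)^r w ≤ C ∫ f^r M w` for every weight `w` (`weighted_strong`);
* if `M u ≤ K u` and `σ = u^a` with `0 ≤ a ≤ 1`, then
  `∫ (M f)^r σ^(1-r) ≤ C K^r ∫ f^r σ^(1-r)` (`a1_strong`). Indeed `M f ≤ K σ M_σ(f / σ)` where `M_σ`
  is the centered maximal function of the measure `σ dx`, whose norm on `L^r(σ)` is controlled by the
  covering theorem with a constant that does not see `σ`.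

*Case `p ≤ r`.* Let `F = (∑ f_k^r)^(1/r)`. The Rubio de Francia algorithm gives `u ≥ F` with
`‖u‖_p ≤ 2 ‖F‖_p` and `M u ≤ K u`, `K = 2 ‖M‖_p ≲ p / (p - 1)`. The second weighted bound holds with
weight `u^(p-r)`; summing over `k` and using `F^r u^(p-r) ≤ F^p`, then Hölder's inequality, gives the
claim with constant `≲ r / (r - 1) * p / (p - 1)`.

*Case `p > r`.* Let `G = ∑ (M f_k)^r`. Testing `G` against `G^(p/r-1)` and applying the first weighted
bound gives the claim from the boundedness of `M` on `L^s`, `s = (p/r)'`, whose norm is `≲ p / r`.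
Truncating `G` makes the quantity that is divided out finite.
-/

open MeasureTheory Real
open scoped ENNReal BigOperators

noncomputable section

/-- the (centered) Hardy–Littlewood maximal function, with values in `ℝ≥0∞` -/
def HLmax {n : ℕ} (g : EuclideanSpace ℝ (Fin n) → ℝ) (x : EuclideanSpace ℝ (Fin n)) : ℝ≥0∞ :=
  ⨆ (r : ℝ) (_ : 0 < r),
    (volume (Metric.ball x r))⁻¹ * ∫⁻ y in Metric.ball x r, ENNReal.ofReal |g y|

namespace FS

open Set Metric

variable {n : ℕ}

local notation "𝔼" => EuclideanSpace ℝ (Fin n)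

/-- The centered Hardy–Littlewood maximal function of an `ℝ≥0∞`-valued function, so that it can be
iterated. -/
def MM (g : 𝔼 → ℝ≥0∞) (x : 𝔼) : ℝ≥0∞ :=
  ⨆ (r : ℝ) (_ : 0 < r), (volume (ball x r))⁻¹ * ∫⁻ y in ball x r, g y

/-! ### The maximal function of a nonnegative function -/

lemma avg_le_MM (g : 𝔼 → ℝ≥0∞) (x : 𝔼) {ρ : ℝ} (hρ : 0 < ρ) :
    (volume (ball x ρ))⁻¹ * ∫⁻ y in ball x ρ, g y ≤ MM g x :=
  le_iSup₂_of_le (f := fun (r : ℝ) (_ : 0 < r) =>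
    (volume (ball x r))⁻¹ * ∫⁻ y in ball x r, g y) ρ hρ le_rfl

lemma vol_pos (x : 𝔼) {ρ : ℝ} (hρ : 0 < ρ) : volume (ball x ρ) ≠ 0 :=
  (measure_ball_pos volume x hρ).ne'

lemma vol_fin (x : 𝔼) (ρ : ℝ) : volume (ball x ρ) ≠ ∞ := measure_ball_lt_top.ne

lemma lint_le_MM (g : 𝔼 → ℝ≥0∞) (x : 𝔼) {ρ : ℝ} (hρ : 0 < ρ) :
    ∫⁻ y in ball x ρ, g y ≤ MM g x * volume (ball x ρ) := by
  have h := avg_le_MM g x hρ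
  rw [mul_comm, ← div_eq_mul_inv] at h
  exact (ENNReal.div_le_iff (vol_pos x hρ) (vol_fin x ρ)).1 h

lemma exists_of_lt_MM {g : 𝔼 → ℝ≥0∞} {x : 𝔼} {a : ℝ≥0∞} (h : a < MM g x) :
    ∃ ρ : ℝ, 0 < ρ ∧ a * volume (ball x ρ) < ∫⁻ y in ball x ρ, g y := by
  simp only [MM, lt_iSup_iff] at h
  obtain ⟨ρ, hρ, h⟩ := h
  refine ⟨ρ, hρ, ?_⟩
  rw [mul_comm, ← div_eq_mul_inv] at h
  exact (ENNReal.lt_div_iff_mul_lt (Or.inl (vol_pos x hρ)) (Or.inl (vol_fin x ρ))).1 h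

lemma MM_mono {f g : 𝔼 → ℝ≥0∞} (h : ∀ x, f x ≤ g x) (x : 𝔼) : MM f x ≤ MM g x := by
  unfold MM
  gcongr with ρ hρ
  exact h _

lemma MM_congr {f g : 𝔼 → ℝ≥0∞} (h : f =ᵐ[volume] g) (x : 𝔼) : MM f x = MM g x := by
  unfold MM
  congr! 4 with ρ hρ
  exact lintegral_congr_ae (ae_restrict_of_ae h)

lemma MM_one_le (x : 𝔼) : MM (fun _ : 𝔼 => 1) x ≤ 1 := by
  refine iSup₂_le fun ρ hρ => ?_
  simp [ENNReal.inv_mul_cancel (vol_pos x hρ) (vol_fin x ρ)]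

lemma MM_const_mul (c : ℝ≥0∞) {g : 𝔼 → ℝ≥0∞} (hg : Measurable g) (x : 𝔼) :
    MM (fun y => c * g y) x = c * MM g x := by
  simp only [MM, ENNReal.mul_iSup, lintegral_const_mul c hg]
  exact iSup_congr fun ρ => iSup_congr fun _ => by ac_rfl

lemma MM_tsum {g : ℕ → 𝔼 → ℝ≥0∞} (hg : ∀ k, Measurable (g k)) (x : 𝔼) :
    MM (fun y => ∑' k, g k y) x ≤ ∑' k, MM (g k) x := by
  refine iSup₂_le fun ρ hρ => ?_
  rw [lintegral_tsum fun k => (hg k).aemeasurable, ← ENNReal.tsum_mul_left]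
  exact ENNReal.tsum_le_tsum fun k => avg_le_MM _ _ hρ

lemma exists_smaller_ball (τ : Measure 𝔼) {x : 𝔼} {ρ : ℝ} {a : ℝ≥0∞} (h : a < τ (ball x ρ)) :
    ∃ δ : ℝ, 0 < δ ∧ a < τ (ball x (ρ - δ)) := by
  have hU : ball x ρ = ⋃ k : ℕ, ball x (ρ - 1 / ((k : ℝ) + 1)) := by
    ext y
    simp only [mem_ball, mem_iUnion]
    constructor
    · intro hy
      obtain ⟨k, hk⟩ := exists_nat_one_div_lt (sub_pos.2 hy)
      exact ⟨k, by linarith⟩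
    · rintro ⟨k, hk⟩
      have : (0:ℝ) < 1 / ((k : ℝ) + 1) := by positivity
      linarith
  have hmono : Monotone fun k : ℕ => ball x (ρ - 1 / ((k : ℝ) + 1)) := by
    intro i j hij
    refine ball_subset_ball ?_
    have : 1 / ((j : ℝ) + 1) ≤ 1 / ((i : ℝ) + 1) := one_div_le_one_div_of_le (by positivity) (by
      have : (i : ℝ) ≤ j := by exact_mod_cast hij
      linarith)
    linarith
  rw [hU, hmono.measure_iUnion, lt_iSup_iff] at h
  obtain ⟨k, hk⟩ := h
  exact ⟨1 / ((k : ℝ) + 1), by positivity, hk⟩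

/-- The maximal function is lower semicontinuous, because the mass of an open ball is. -/
lemma measurable_MM (g : 𝔼 → ℝ≥0∞) : Measurable (MM g) := by
  refine measurable_of_Ioi fun a => IsOpen.measurableSet ?_
  rw [Metric.isOpen_iff]
  intro x hx
  have hx' : a < MM g x := hx
  obtain ⟨ρ, hρ, h⟩ := exists_of_lt_MM hx'
  rw [← withDensity_apply _ measurableSet_ball] at h
  obtain ⟨δ, hδ, h'⟩ := exists_smaller_ball _ h
  refine ⟨δ, hδ, fun y hy => ?_⟩
  have hsub : ball x (ρ - δ) ⊆ ball y ρ := by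
    refine ball_subset_ball' ?_
    rw [mem_ball, dist_comm] at hy
    linarith
  have hvol : volume (ball x ρ) = volume (ball y ρ) := by
    rw [Measure.addHaar_ball_center, ← Measure.addHaar_ball_center volume y]
  have h2 : a * volume (ball y ρ) < ∫⁻ z in ball y ρ, g z := by
    rw [← withDensity_apply _ measurableSet_ball, ← hvol]
    exact h'.trans_le (measure_mono hsub)
  have h3 : a < (volume (ball y ρ))⁻¹ * ∫⁻ z in ball y ρ, g z := by
    rw [mul_comm, ← div_eq_mul_inv,
      ENNReal.lt_div_iff_mul_lt (Or.inl (vol_pos y hρ)) (Or.inl (vol_fin y ρ))]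
    exact h2
  exact h3.trans_le (avg_le_MM g y hρ)

/-! ### Covering and interpolation -/

variable (n) in
/-- A covering estimate comparing two arbitrary measures. -/
lemma besicovitch : ∃ N : ℕ, ∀ (μ τ : Measure 𝔼) (S : Set 𝔼),
    (∀ x ∈ S, ∃ ρ : ℝ, 0 < ρ ∧ μ (ball x ρ) ≤ τ (ball x ρ)) → μ S ≤ N * τ univ := by
  obtain ⟨N, κ, hκ, hN⟩ := HasBesicovitchCovering.no_satelliteConfig (α := 𝔼)
  refine ⟨N, fun μ τ S hS => ?_⟩
  choose! ρ hρ hB using hS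
  -- The selection theorem needs bounded radii, so `S` is exhausted by the sets `T R`.
  set T : ℕ → Set 𝔼 := fun R => {x ∈ S | ρ x ≤ R} with hT
  have hST : S = ⋃ R, T R := by
    ext x
    simp only [hT, mem_iUnion, mem_ofPred_eq]
    exact ⟨fun hx => (exists_nat_ge (ρ x)).imp fun R hR => ⟨hx, hR⟩, fun ⟨R, hx, _⟩ => hx⟩
  have hTm : Monotone T := fun i j hij x hx => ⟨hx.1, hx.2.trans (by exact_mod_cast hij)⟩
  rw [hST, hTm.measure_iUnion]
  refine iSup_le fun R => ?_
  let q : Besicovitch.BallPackage (T R) 𝔼 :=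
    { c := fun x => x
      r := fun x => ρ x
      rpos := fun x => hρ x x.2.1
      r_bound := R
      r_le := fun x => x.2.2 }
  obtain ⟨s, hs, hcov⟩ := Besicovitch.exist_disjoint_covering_families hκ hN q
  have hs' : ∀ i, (s i).PairwiseDisjoint fun j => ball (q.c j) (q.r j) := fun i a ha b hb hab =>
    (hs i ha hb hab).mono ball_subset_closedBall ball_subset_closedBall
  have hcount : ∀ i, (s i).Countable := fun i =>
    (hs' i).countable_of_isOpen (fun j _ => isOpen_ball) fun j _ => ⟨_, mem_ball_self (q.rpos j)⟩
  calc μ (T R) ≤ μ (⋃ i : Fin N, ⋃ j ∈ s i, ball (q.c j) (q.r j)) := by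
        refine measure_mono (subset_trans ?_ hcov)
        intro x hx
        exact ⟨⟨x, hx⟩, rfl⟩
    _ ≤ ∑ i : Fin N, μ (⋃ j ∈ s i, ball (q.c j) (q.r j)) := measure_iUnion_fintype_le _ _
    _ ≤ ∑ i : Fin N, τ univ := by
        refine Finset.sum_le_sum fun i _ => ?_
        have := (hcount i).to_subtype
        calc μ (⋃ j ∈ s i, ball (q.c j) (q.r j)) ≤ ∑' j : s i, μ (ball (q.c j) (q.r j)) :=
              measure_biUnion_le _ (hcount i) _
          _ ≤ ∑' j : s i, τ (ball (q.c j) (q.r j)) :=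
              ENNReal.tsum_le_tsum fun j => hB _ j.1.2.1
          _ = τ (⋃ j ∈ s i, ball (q.c j) (q.r j)) :=
              (measure_biUnion (hcount i) (hs' i) fun j _ => measurableSet_ball).symm
          _ ≤ τ univ := measure_mono (subset_univ _)
    _ = N * τ univ := by simp

/-- The layer-cake formula for a single number. -/
lemma rpow_layer {r : ℝ} (hr : 0 < r) (y : ℝ≥0∞) :
    ∫⁻ t in Ioi (0:ℝ), {t : ℝ | ENNReal.ofReal t < y}.indicator
      (fun t => ENNReal.ofReal (r * t ^ (r - 1))) t = y ^ r := by
  have key : ∀ b : ℝ, 0 ≤ b → ∫⁻ t in Ioo 0 b, ENNReal.ofReal (r * t ^ (r - 1))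
      = ENNReal.ofReal b ^ r := by
    intro b hb
    have hIntble : IntervalIntegrable (fun t : ℝ => r * t ^ (r - 1)) volume 0 b :=
      (intervalIntegral.intervalIntegrable_rpow' (by linarith)).const_mul r
    rw [intervalIntegrable_iff_integrableOn_Ioc_of_le hb] at hIntble
    rw [setLIntegral_congr Ioo_ae_eq_Ioc, ← ofReal_integral_eq_lintegral_ofReal hIntble,
      ← intervalIntegral.integral_of_le hb, intervalIntegral.integral_const_mul,
      integral_rpow (Or.inl (by linarith)), ENNReal.ofReal_rpow_of_nonneg hb hr.le]
    · congr 1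
      rw [sub_add_cancel, zero_rpow hr.ne']
      field_simp
      ring
    · filter_upwards [ae_restrict_mem measurableSet_Ioc] with t ht
      have := rpow_nonneg ht.1.le (r - 1)
      simp only [Pi.zero_apply]
      positivity
  have meas : MeasurableSet {t : ℝ | ENNReal.ofReal t < y} :=
    measurableSet_lt ENNReal.measurable_ofReal measurable_const
  rw [lintegral_indicator meas, Measure.restrict_restrict meas]
  by_cases hy : y = ∞
  · subst hy
    rw [ENNReal.top_rpow_of_pos hr]
    refine ENNReal.eq_top_of_forall_nnreal_le fun c => ?_
    calc (c : ℝ≥0∞) = ENNReal.ofReal ((c : ℝ) ^ (1 / r)) ^ r := by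
          rw [← ENNReal.ofReal_rpow_of_nonneg (NNReal.coe_nonneg c) (by positivity), ← ENNReal.rpow_mul,
            one_div_mul_cancel hr.ne', ENNReal.rpow_one, ENNReal.ofReal_coe_nnreal]
      _ ≤ _ := by
          rw [← key _ (by positivity)]
          refine lintegral_mono_set fun t ht => ⟨?_, ht.1⟩
          simp
  · have : {t : ℝ | ENNReal.ofReal t < y} ∩ Ioi 0 = Ioo 0 y.toReal := by
      ext t
      simp only [mem_inter_iff, mem_ofPred_eq, mem_Ioi, mem_Ioo]
      rw [and_comm]
      refine and_congr_right fun ht => ?_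
      rw [ENNReal.ofReal_lt_iff_lt_toReal ht.le hy]
    rw [this, key _ ENNReal.toReal_nonneg, ENNReal.ofReal_toReal hy]

/-- Marcinkiewicz interpolation between a weak `L¹` bound (already localized to the large values of
`g`) and the trivial `L^∞` bound. -/
lemma marcinkiewicz {μ ν : Measure 𝔼} [SFinite μ] [SFinite ν] {h g : 𝔼 → ℝ≥0∞}
    (hh : Measurable h) (hg : Measurable g) (C : ℝ≥0∞) {r : ℝ} (hr : 1 < r)
    (H : ∀ t : ℝ, 0 < t → ENNReal.ofReal t * μ {x | ENNReal.ofReal t < h x} ≤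
      C * ∫⁻ x, {x | ENNReal.ofReal t < 2 * g x}.indicator g x ∂ν) :
    ∫⁻ x, h x ^ r ∂μ ≤ C * (ENNReal.ofReal (r / (r - 1)) * 2 ^ (r - 1)) * ∫⁻ x, g x ^ r ∂ν := by
  have hr1 : 0 < r - 1 := by linarith
  have hM : ∀ (k : 𝔼 → ℝ≥0∞) (q : ℝ) (m : 𝔼 → ℝ≥0∞), Measurable k → Measurable m → Measurable
      (Function.uncurry fun (x : 𝔼) (t : ℝ) => m x * {t : ℝ | ENNReal.ofReal t < k x}.indicator
        (fun t => ENNReal.ofReal (q * t ^ (q - 1))) t) := by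
    intro k q m hk hm
    have hS : MeasurableSet {z : 𝔼 × ℝ | ENNReal.ofReal z.2 < k z.1} :=
      measurableSet_lt (by fun_prop) (by fun_prop)
    have h1 : Measurable fun z : 𝔼 × ℝ => ENNReal.ofReal (q * z.2 ^ (q - 1)) := by fun_prop
    exact (hm.comp measurable_fst).mul (h1.indicator hS)
  calc ∫⁻ x, h x ^ r ∂μ
      = ∫⁻ x, (∫⁻ t in Ioi (0:ℝ), 1 * {t : ℝ | ENNReal.ofReal t < h x}.indicator
          (fun t => ENNReal.ofReal (r * t ^ (r - 1))) t) ∂μ := by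
        refine lintegral_congr fun x => ?_
        simp only [one_mul]
        exact (rpow_layer (by linarith) _).symm
    _ = ∫⁻ t in Ioi (0:ℝ), ∫⁻ x, 1 * {t : ℝ | ENNReal.ofReal t < h x}.indicator
          (fun t => ENNReal.ofReal (r * t ^ (r - 1))) t ∂μ :=
        lintegral_lintegral_swap (hM h r (fun _ => 1) hh measurable_const).aemeasurable
    _ ≤ ∫⁻ t in Ioi (0:ℝ), C * ENNReal.ofReal (r / (r - 1)) *
          ∫⁻ x, g x * {t : ℝ | ENNReal.ofReal t < 2 * g x}.indicator
            (fun t => ENNReal.ofReal ((r - 1) * t ^ (r - 1 - 1))) t ∂ν := by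
        refine setLIntegral_mono' measurableSet_Ioi fun t ht => ?_
        have ht : 0 < t := ht
        have e1 : ∫⁻ x, 1 * {t : ℝ | ENNReal.ofReal t < h x}.indicator
            (fun t => ENNReal.ofReal (r * t ^ (r - 1))) t ∂μ
            = ENNReal.ofReal (r / (r - 1)) * ENNReal.ofReal ((r - 1) * t ^ (r - 1 - 1)) *
              (ENNReal.ofReal t * μ {x | ENNReal.ofReal t < h x}) := by
          have : ∀ x, 1 * {t : ℝ | ENNReal.ofReal t < h x}.indicator
            (fun t => ENNReal.ofReal (r * t ^ (r - 1))) t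
            = {x | ENNReal.ofReal t < h x}.indicator
              (fun _ => ENNReal.ofReal (r * t ^ (r - 1))) x := by
            intro x; rw [one_mul]; rfl
          simp_rw [this]
          rw [lintegral_indicator_const (measurableSet_lt measurable_const hh), ← mul_assoc]
          congr 1
          have := rpow_nonneg ht.le (r - 1 - 1)
          rw [← ENNReal.ofReal_mul (by positivity), ← ENNReal.ofReal_mul (by positivity)]
          congr 1
          have h2 : t ^ (r - 1) = t ^ (r - 1 - 1) * t := by
            rw [← rpow_add_one ht.ne']; congr 1; ring
          rw [h2]
          field_simp
        have e2 : ∫⁻ x, g x * {t : ℝ | ENNReal.ofReal t < 2 * g x}.indicator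
            (fun t => ENNReal.ofReal ((r - 1) * t ^ (r - 1 - 1))) t ∂ν
            = ENNReal.ofReal ((r - 1) * t ^ (r - 1 - 1)) *
              ∫⁻ x, {x | ENNReal.ofReal t < 2 * g x}.indicator g x ∂ν := by
          rw [← lintegral_const_mul _ (hg.indicator (measurableSet_lt measurable_const (by fun_prop)))]
          refine lintegral_congr fun x => ?_
          by_cases hx : ENNReal.ofReal t < 2 * g x
          · rw [indicator_of_mem (show t ∈ {t : ℝ | ENNReal.ofReal t < 2 * g x} from hx),
              indicator_of_mem (show x ∈ {x | ENNReal.ofReal t < 2 * g x} from hx), mul_comm]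
          · rw [indicator_of_notMem (show t ∉ {t : ℝ | ENNReal.ofReal t < 2 * g x} from hx),
              indicator_of_notMem (show x ∉ {x | ENNReal.ofReal t < 2 * g x} from hx)]
            simp
        rw [e1, e2]
        calc _ ≤ ENNReal.ofReal (r / (r - 1)) * ENNReal.ofReal ((r - 1) * t ^ (r - 1 - 1)) *
              (C * ∫⁻ x, {x | ENNReal.ofReal t < 2 * g x}.indicator g x ∂ν) := by
                exact mul_le_mul_right (H t ht) _
          _ = _ := by ring
    _ = C * ENNReal.ofReal (r / (r - 1)) * ∫⁻ x, (∫⁻ t in Ioi (0:ℝ),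
          g x * {t : ℝ | ENNReal.ofReal t < 2 * g x}.indicator
            (fun t => ENNReal.ofReal ((r - 1) * t ^ (r - 1 - 1))) t) ∂ν := by
        have hm := hM (fun x => 2 * g x) (r - 1) g (by fun_prop) hg
        rw [lintegral_lintegral_swap hm.aemeasurable,
          lintegral_const_mul _ hm.lintegral_prod_left]
    _ = C * ENNReal.ofReal (r / (r - 1)) * ∫⁻ x, 2 ^ (r - 1) * g x ^ r ∂ν := by
        congr 1
        refine lintegral_congr fun x => ?_
        rw [lintegral_const_mul, rpow_layer hr1, ENNReal.mul_rpow_of_nonneg _ _ hr1.le]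
        · have : g x ^ r = g x * g x ^ (r - 1) := by
            conv_rhs => rw [← ENNReal.rpow_one (g x), ← ENNReal.rpow_mul, one_mul]
            rw [← ENNReal.rpow_add_of_nonneg _ _ zero_le_one hr1.le]
            congr 1; ring
          rw [this]; ring
        · exact Measurable.indicator (by fun_prop)
            (measurableSet_lt (by fun_prop) (by fun_prop))
    _ = _ := by
        rw [lintegral_const_mul _ (by fun_prop)]
        ring

/-- Values of `g` below `t / 2` cannot account for an average above `t`. -/
lemma mass_le_truncated (s : Measure 𝔼) {B : Set 𝔼} (hB : s B ≠ ∞) {g : 𝔼 → ℝ≥0∞}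
    (hg : Measurable g) {t : ℝ}
    (h : ENNReal.ofReal t * s B < ∫⁻ y in B, g y ∂s) :
    ENNReal.ofReal t * s B ≤
      2 * ∫⁻ y in B, {x | ENNReal.ofReal t < 2 * g x}.indicator g y ∂s := by
  set G := {x | ENNReal.ofReal t < 2 * g x}.indicator g with hG
  have hGm : Measurable G := hg.indicator (measurableSet_lt measurable_const (by fun_prop))
  have hpt : ∀ y, 2 * g y ≤ 2 * G y + ENNReal.ofReal t := by
    intro y
    by_cases hy : ENNReal.ofReal t < 2 * g y
    · rw [hG, indicator_of_mem (show y ∈ {x | ENNReal.ofReal t < 2 * g x} from hy)]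
      exact le_self_add
    · exact (not_lt.1 hy).trans le_add_self
  have h1 : 2 * ∫⁻ y in B, g y ∂s ≤ 2 * ∫⁻ y in B, G y ∂s + ENNReal.ofReal t * s B := by
    calc 2 * ∫⁻ y in B, g y ∂s = ∫⁻ y in B, 2 * g y ∂s := (lintegral_const_mul _ hg).symm
      _ ≤ ∫⁻ y in B, (2 * G y + ENNReal.ofReal t) ∂s := lintegral_mono hpt
      _ = _ := by
        rw [lintegral_add_right _ measurable_const, lintegral_const_mul _ hGm]
        simp
  have hfin : ENNReal.ofReal t * s B ≠ ∞ := ENNReal.mul_ne_top ENNReal.ofReal_ne_top hB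
  have h2 : ENNReal.ofReal t * s B + ENNReal.ofReal t * s B ≤
      2 * ∫⁻ y in B, G y ∂s + ENNReal.ofReal t * s B := by
    rw [← two_mul]
    exact (mul_le_mul_right h.le 2).trans h1
  exact (ENNReal.add_le_add_iff_right hfin).1 h2

/-- The covering constant `N` of `besicovitch`, a function of the dimension only. -/
def bN (n : ℕ) : ℕ := (besicovitch n).choose

/-- From local domination on balls to a weak-type inequality. -/
lemma weak_of_balls {t : ℝ} (μ ν : Measure 𝔼) (G : 𝔼 → ℝ≥0∞) (c : ℝ≥0∞) (S : Set 𝔼)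
    (h : ∀ x ∈ S, ∃ ρ : ℝ, 0 < ρ ∧
      ENNReal.ofReal t * μ (ball x ρ) ≤ c * ∫⁻ y in ball x ρ, G y ∂ν) :
    ENNReal.ofReal t * μ S ≤ (bN n * c) * ∫⁻ y, G y ∂ν := by
  have := (besicovitch n).choose_spec (ENNReal.ofReal t • μ) (c • ν.withDensity G) S (by
    intro x hx
    obtain ⟨ρ, hρ, hh⟩ := h x hx
    refine ⟨ρ, hρ, ?_⟩
    simpa [withDensity_apply _ measurableSet_ball] using hh)
  simpa [bN, mul_assoc] using this

lemma volume_ball_two_mul (hn : 0 < n) (x y : 𝔼) {ρ : ℝ} :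
    volume (ball y (2 * ρ)) = 2 ^ n * volume (ball x ρ) := by
  have : Nonempty (Fin n) := ⟨⟨0, hn⟩⟩
  rw [Measure.addHaar_ball_mul volume y (by norm_num) ρ, Measure.addHaar_ball_center volume x]
  congr 1
  rw [ENNReal.ofReal_pow (by norm_num)]
  simp

/-! ### Weighted inequalities -/

/-- The Fefferman–Stein weighted inequality: `M` maps `L^r(M w)` to `L^r(w)`. -/
lemma weighted_strong (hn : 0 < n) {f w : 𝔼 → ℝ≥0∞} (hf : Measurable f) (hw : Measurable w)
    {r : ℝ} (hr : 1 < r) :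
    ∫⁻ x, MM f x ^ r * w x ≤ (bN n * (2 ^ n * 2)) * (ENNReal.ofReal (r / (r - 1)) * 2 ^ (r - 1)) *
      ∫⁻ x, f x ^ r * MM w x := by
  have hMf := measurable_MM f
  have hMw := measurable_MM w
  have key := marcinkiewicz (μ := volume.withDensity w) (ν := volume.withDensity (MM w)) hMf hf
    (bN n * (2 ^ n * 2)) hr (by
    intro t ht
    set G := {x | ENNReal.ofReal t < 2 * f x}.indicator f with hG
    have hGm : Measurable G := hf.indicator (measurableSet_lt measurable_const (by fun_prop))
    refine weak_of_balls _ _ G (2 ^ n * 2) _ fun x hx => ?_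
    have hx : ENNReal.ofReal t < MM f x := hx
    obtain ⟨ρ, hρ, hlt⟩ := exists_of_lt_MM hx
    refine ⟨ρ, hρ, ?_⟩
    have h1 := mass_le_truncated volume (vol_fin x ρ) hf hlt
    rw [← hG] at h1
    rw [withDensity_apply _ measurableSet_ball]
    set W := ∫⁻ y in ball x ρ, w y with hW
    rw [setLIntegral_withDensity_eq_setLIntegral_mul _ hMw hGm measurableSet_ball]
    -- Recentring the ball at one of its points `y` costs a factor `2 ^ n`.
    have h2 : ∀ y ∈ ball x ρ, W ≤ 2 ^ n * volume (ball x ρ) * MM w y := by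
      intro y hy
      calc W ≤ ∫⁻ z in ball y (2 * ρ), w z := by
            refine lintegral_mono_set (ball_subset_ball' ?_)
            rw [mem_ball, dist_comm] at hy
            linarith
        _ ≤ MM w y * volume (ball y (2 * ρ)) := lint_le_MM w y (by linarith)
        _ = _ := by rw [volume_ball_two_mul hn x y]; ring
    have h3 : volume (ball x ρ) * (ENNReal.ofReal t * W) ≤
        volume (ball x ρ) * (2 ^ n * 2 * ∫⁻ y in ball x ρ, (MM w * G) y) := by
      calc volume (ball x ρ) * (ENNReal.ofReal t * W)
          = (ENNReal.ofReal t * volume (ball x ρ)) * W := by ring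
        _ ≤ (2 * ∫⁻ y in ball x ρ, G y) * W := by gcongr
        _ = 2 * ∫⁻ y in ball x ρ, G y * W := by rw [lintegral_mul_const _ hGm]; ring
        _ ≤ 2 * ∫⁻ y in ball x ρ, (2 ^ n * volume (ball x ρ)) * (MM w * G) y := by
            gcongr 2 * ?_
            refine setLIntegral_mono' measurableSet_ball fun y hy => ?_
            calc G y * W ≤ G y * (2 ^ n * volume (ball x ρ) * MM w y) := by
                  gcongr; exact h2 y hy
              _ = _ := by simp only [Pi.mul_apply]; ring
        _ = _ := by rw [lintegral_const_mul _ (hMw.mul hGm)]; ring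
    exact (ENNReal.mul_le_mul_iff_right (vol_pos x hρ) (vol_fin x ρ)).1 h3)
  rw [lintegral_withDensity_eq_lintegral_mul _ hw (by fun_prop),
    lintegral_withDensity_eq_lintegral_mul _ hMw (by fun_prop)] at key
  simpa only [Pi.mul_apply, mul_comm] using key

lemma strong (hn : 0 < n) {f : 𝔼 → ℝ≥0∞} (hf : Measurable f) {r : ℝ} (hr : 1 < r) :
    ∫⁻ x, MM f x ^ r ≤ (bN n * (2 ^ n * 2)) * (ENNReal.ofReal (r / (r - 1)) * 2 ^ (r - 1)) *
      ∫⁻ x, f x ^ r := by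
  have h := weighted_strong hn hf (w := fun _ => 1) measurable_const hr
  simp only [mul_one] at h
  refine h.trans ?_
  gcongr with x
  exact mul_le_of_le_one_right' (MM_one_le x)

/-- Jensen's inequality for averages over balls. -/
lemma MM_rpow_le (u : 𝔼 → ℝ≥0∞) (hu : Measurable u) {a : ℝ} (h0 : 0 ≤ a) (h1 : a ≤ 1) (x : 𝔼) :
    MM (fun y => u y ^ a) x ≤ MM u x ^ a := by
  refine iSup₂_le fun ρ hρ => ?_
  have h := ENNReal.lintegral_mul_norm_pow_le (μ := (volume (ball x ρ))⁻¹ • volume.restrict (ball x ρ))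
    hu.aemeasurable (g := fun _ => 1) aemeasurable_const h0 (sub_nonneg.2 h1) (by ring)
  simp only [ENNReal.one_rpow, mul_one, lintegral_smul_measure, smul_eq_mul, lintegral_one,
    Measure.smul_apply, Measure.restrict_apply_univ,
    ENNReal.inv_mul_cancel (vol_pos x hρ) (vol_fin x ρ)] at h
  exact h.trans (ENNReal.rpow_le_rpow (avg_le_MM u x hρ) h0)

/-- If `u` is an `A₁` weight with constant `K`, then `M` is bounded on `L^r(u ^ (-a (r-1)))` with
norm at most a dimensional multiple of `K r / (r-1)`, for `0 ≤ a ≤ 1`. With `σ = u ^ a`, every average of `f` is a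
`σ`-average of `f / σ` times an average of `σ`, the latter being at most `K σ`. -/
lemma a1_strong {u f : 𝔼 → ℝ≥0∞} (hu : Measurable u) (hf : Measurable f) (hu0 : ∀ x, u x ≠ 0)
    (hut : ∀ᵐ x, u x ≠ ∞) {K : ℝ≥0∞} (hK1 : 1 ≤ K) (hKt : K ≠ ∞) (hK : ∀ x, MM u x ≤ K * u x)
    {a : ℝ} (h0 : 0 ≤ a) (h1 : a ≤ 1) {r : ℝ} (hr : 1 < r) :
    ∫⁻ x, MM f x ^ r * u x ^ (-(a * (r - 1))) ≤
      (bN n * 2) * (ENNReal.ofReal (r / (r - 1)) * 2 ^ (r - 1)) * K ^ r *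
        ∫⁻ x, f x ^ r * u x ^ (-(a * (r - 1))) := by
  have hMf := measurable_MM f
  have hr0 : 0 ≤ r := by linarith
  have hK0 : K ≠ 0 := (zero_lt_one.trans_le hK1).ne'
  set σ : 𝔼 → ℝ≥0∞ := fun x => u x ^ a with hσ
  have hσm : Measurable σ := by fun_prop
  have hσ0 : ∀ x, u x ≠ ∞ → σ x ≠ 0 := fun x hx =>
    (ENNReal.rpow_pos (pos_iff_ne_zero.2 (hu0 x)) hx).ne'
  have hσt : ∀ x, u x ≠ ∞ → σ x ≠ ∞ := fun x hx => ENNReal.rpow_ne_top_of_nonneg h0 hx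
  have hMσ : ∀ x, MM σ x ≤ K * σ x := fun x => by
    calc MM σ x ≤ MM u x ^ a := MM_rpow_le u hu h0 h1 x
      _ ≤ (K * u x) ^ a := ENNReal.rpow_le_rpow (hK x) h0
      _ = K ^ a * σ x := ENNReal.mul_rpow_of_nonneg _ _ h0
      _ ≤ K * σ x := by
        gcongr
        exact (ENNReal.rpow_le_rpow_of_exponent_le hK1 h1).trans (ENNReal.rpow_one K).le
  set s : Measure 𝔼 := volume.withDensity σ with hs
  set g : 𝔼 → ℝ≥0∞ := fun x => f x * (σ x)⁻¹ with hg
  have hgm : Measurable g := by fun_prop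
  set h : 𝔼 → ℝ≥0∞ := fun x => MM f x * (K * σ x)⁻¹ with hh
  have hhm : Measurable h := by fun_prop
  have hst : ∀ᵐ x ∂s, u x ≠ ∞ := (withDensity_absolutelyContinuous _ _).ae_le hut
  have key := marcinkiewicz (μ := s) (ν := s) hhm hgm (bN n * 2) hr (by
    intro t ht
    set G := {x | ENNReal.ofReal t < 2 * g x}.indicator g with hG
    have : s {x | ENNReal.ofReal t < h x} ≤ s {x | ENNReal.ofReal t < h x ∧ u x ≠ ∞} := by
      refine measure_mono_ae ?_
      filter_upwards [hst] with x hx hx'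
      exact ⟨hx', hx⟩
    refine (mul_le_mul_right this _).trans ?_
    refine weak_of_balls _ _ G 2 _ fun x hx => ?_
    obtain ⟨hx, hxt⟩ := hx
    have hlt : ENNReal.ofReal t * (K * σ x) < MM f x := by
      rw [hh] at hx
      exact (ENNReal.lt_div_iff_mul_lt (Or.inl (mul_ne_zero hK0 (hσ0 x hxt)))
        (Or.inl (ENNReal.mul_ne_top hKt (hσt x hxt)))).1 (by rwa [div_eq_mul_inv])
    obtain ⟨ρ, hρ, hlt⟩ := exists_of_lt_MM hlt
    refine ⟨ρ, hρ, ?_⟩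
    have hsB : s (ball x ρ) ≤ K * σ x * volume (ball x ρ) := by
      rw [hs, withDensity_apply _ measurableSet_ball]
      refine (lint_le_MM σ x hρ).trans ?_
      gcongr
      exact hMσ x
    have hsf : s (ball x ρ) ≠ ∞ := ne_top_of_le_ne_top
      (ENNReal.mul_ne_top (ENNReal.mul_ne_top hKt (hσt x hxt)) (vol_fin x ρ)) hsB
    refine mass_le_truncated s hsf hgm ?_
    have hfg : ∫⁻ y in ball x ρ, g y ∂s = ∫⁻ y in ball x ρ, f y := by
      rw [hs, setLIntegral_withDensity_eq_setLIntegral_mul _ hσm hgm measurableSet_ball]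
      refine lintegral_congr_ae (ae_restrict_of_ae ?_)
      filter_upwards [hut] with y hy
      simp only [hg, Pi.mul_apply]
      rw [mul_comm, mul_assoc, ENNReal.inv_mul_cancel (hσ0 y hy) (hσt y hy), mul_one]
    rw [hfg]
    refine lt_of_le_of_lt ?_ hlt
    rw [mul_assoc]
    gcongr)
  rw [hs, lintegral_withDensity_eq_lintegral_mul _ hσm (by fun_prop),
    lintegral_withDensity_eq_lintegral_mul _ hσm (by fun_prop)] at key
  have epow : ∀ x, u x ≠ ∞ → σ x * (σ x)⁻¹ ^ r = u x ^ (-(a * (r - 1))) := by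
    intro x hx
    rw [hσ]
    simp only
    rw [← ENNReal.rpow_neg, ← ENNReal.rpow_mul, ← ENNReal.rpow_add _ _ (hu0 x) hx]
    congr 1; ring
  have e1 : ∫⁻ x, (σ * fun x => g x ^ r) x = ∫⁻ x, f x ^ r * u x ^ (-(a * (r - 1))) := by
    refine lintegral_congr_ae ?_
    filter_upwards [hut] with x hx
    simp only [Pi.mul_apply, hg]
    rw [ENNReal.mul_rpow_of_nonneg _ _ hr0, ← epow x hx]
    ring
  have e2 : K ^ r * ∫⁻ x, (σ * fun x => h x ^ r) x = ∫⁻ x, MM f x ^ r * u x ^ (-(a * (r - 1))) := by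
    rw [← lintegral_const_mul _ (by fun_prop)]
    refine lintegral_congr_ae ?_
    filter_upwards [hut] with x hx
    simp only [Pi.mul_apply, hh]
    rw [ENNReal.mul_rpow_of_nonneg _ _ hr0, ← epow x hx,
      ENNReal.mul_inv (Or.inl hK0) (Or.inl hKt), ENNReal.mul_rpow_of_nonneg _ _ hr0,
      ENNReal.inv_rpow K]
    have hKr0 : K ^ r ≠ 0 := (ENNReal.rpow_pos (pos_iff_ne_zero.2 hK0) hKt).ne'
    have hKrt : K ^ r ≠ ∞ := ENNReal.rpow_ne_top_of_nonneg hr0 hKt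
    calc _ = (K ^ r * (K ^ r)⁻¹) * (MM f x ^ r * (σ x * (σ x)⁻¹ ^ r)) := by ring
      _ = _ := by rw [ENNReal.mul_inv_cancel hKr0 hKrt, one_mul]
  rw [e1] at key
  rw [← e2]
  refine (mul_le_mul_right key (K ^ r)).trans (le_of_eq ?_)
  ring

/-! ### Bookkeeping of constants -/

/-- A dimensional constant absorbing the constants of the covering arguments. -/
def dimC (n : ℕ) : ℝ := (bN n + 1) * 2 ^ n * 2

lemma one_le_dimC (n : ℕ) : 1 ≤ dimC n := by
  have h1 : (1:ℝ) ≤ 2 ^ n := one_le_pow₀ (by norm_num)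
  have h2 : (0:ℝ) ≤ bN n := by positivity
  unfold dimC
  nlinarith [mul_nonneg h2 (by linarith : (0:ℝ) ≤ 2 ^ n)]

/-- A bound for the norm of the maximal operator on `L^r`, of the form `C_n r / (r-1)`. -/
def opA (n : ℕ) (r : ℝ) : ℝ≥0∞ := ENNReal.ofReal (2 * dimC n * (r / (r - 1)))

lemma one_le_opA (n : ℕ) {r : ℝ} (hr : 1 < r) : 1 ≤ opA n r := by
  have h1 := one_le_dimC n
  have h2 : 1 ≤ r / (r - 1) := by rw [le_div_iff₀ (by linarith)]; linarith
  rw [opA, ENNReal.one_le_ofReal]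
  nlinarith

lemma opA_ne_zero (n : ℕ) {r : ℝ} (hr : 1 < r) : opA n r ≠ 0 :=
  (zero_lt_one.trans_le (one_le_opA n hr)).ne'

lemma opA_ne_top (n : ℕ) (r : ℝ) : opA n r ≠ ∞ := ENNReal.ofReal_ne_top

lemma const_le_opA (n : ℕ) {r : ℝ} (hr : 1 < r) :
    (bN n * (2 ^ n * 2)) * (ENNReal.ofReal (r / (r - 1)) * 2 ^ (r - 1)) ≤ opA n r ^ r := by
  have h1 := one_le_dimC n
  have h2 : 1 ≤ r / (r - 1) := by rw [le_div_iff₀ (by linarith)]; linarith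
  have e1 : ((bN n : ℝ≥0∞) * (2 ^ n * 2)) = ENNReal.ofReal ((bN n) * (2 ^ n * 2)) := by
    rw [ENNReal.ofReal_mul (by positivity), ENNReal.ofReal_mul (by positivity),
      ENNReal.ofReal_pow (by positivity)]
    simp
  have e2 : (2 : ℝ≥0∞) ^ (r - 1) = ENNReal.ofReal (2 ^ (r - 1)) := by
    rw [← ENNReal.ofReal_rpow_of_pos (by norm_num)]; simp
  have h0 : 0 ≤ r / (r - 1) := by linarith
  have hD : 0 ≤ dimC n := by linarith
  rw [e1, e2, opA, ← ENNReal.ofReal_mul h0, ← ENNReal.ofReal_mul (by positivity),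
    ENNReal.ofReal_rpow_of_nonneg (by positivity) (by linarith)]
  refine ENNReal.ofReal_le_ofReal ?_
  rw [mul_assoc 2, mul_rpow (by norm_num) (by positivity)]
  have h3 : dimC n * (r / (r - 1)) ≤ (dimC n * (r / (r - 1))) ^ r := by
    refine self_le_rpow_of_one_le ?_ hr.le
    nlinarith
  have h4 : (2:ℝ) ^ (r - 1) ≤ 2 ^ r := rpow_le_rpow_of_exponent_le (by norm_num) (by linarith)
  have h5 : (bN n : ℝ) * (2 ^ n * 2) ≤ dimC n := by
    unfold dimC
    have : (0:ℝ) < 2 ^ n := by positivity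
    nlinarith
  calc (bN n : ℝ) * (2 ^ n * 2) * (r / (r - 1) * 2 ^ (r - 1))
      ≤ dimC n * (r / (r - 1) * 2 ^ r) := by gcongr
    _ = 2 ^ r * (dimC n * (r / (r - 1))) := by ring
    _ ≤ _ := by gcongr

lemma const_le_opA' (n : ℕ) {r : ℝ} (hr : 1 < r) :
    (bN n * 2) * (ENNReal.ofReal (r / (r - 1)) * 2 ^ (r - 1)) ≤ opA n r ^ r := by
  refine le_trans ?_ (const_le_opA n hr)
  gcongr
  exact le_mul_of_one_le_left' (one_le_pow₀ one_le_two)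

lemma strong' (hn : 0 < n) {f : 𝔼 → ℝ≥0∞} (hf : Measurable f) {r : ℝ} (hr : 1 < r) :
    (∫⁻ x, MM f x ^ r) ^ (1 / r) ≤ opA n r * (∫⁻ x, f x ^ r) ^ (1 / r) := by
  have h := (strong hn hf hr).trans (mul_le_mul_left (const_le_opA n hr) _)
  have hr' : 0 ≤ 1 / r := by positivity
  refine (ENNReal.rpow_le_rpow h hr').trans (le_of_eq ?_)
  rw [ENNReal.mul_rpow_of_nonneg _ _ hr', ← ENNReal.rpow_mul, mul_one_div_cancel (by linarith),
    ENNReal.rpow_one]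

/-! ### The Rubio de Francia algorithm -/

/-- Minkowski's inequality for infinite sums. -/
lemma Lp_tsum_le {p : ℝ} (hp : 1 ≤ p) {g : ℕ → 𝔼 → ℝ≥0∞} (hg : ∀ k, Measurable (g k)) :
    (∫⁻ x, (∑' k, g k x) ^ p) ^ (1 / p) ≤ ∑' k, (∫⁻ x, g k x ^ p) ^ (1 / p) := by
  have hp0 : 0 < p := by linarith
  have hfin : ∀ m : ℕ, (∫⁻ x, (∑ k ∈ Finset.range m, g k x) ^ p) ^ (1 / p) ≤
      ∑ k ∈ Finset.range m, (∫⁻ x, g k x ^ p) ^ (1 / p) := by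
    intro m
    induction m with
    | zero => simp [hp0]
    | succ m ih =>
      simp only [Finset.sum_range_succ]
      have hm : Measurable fun x => ∑ k ∈ Finset.range m, g k x := by fun_prop
      exact (ENNReal.lintegral_Lp_add_le hm.aemeasurable (hg m).aemeasurable hp).trans (by gcongr)
  have e : ∀ x, (∑' k, g k x) ^ p = ⨆ m : ℕ, (∑ k ∈ Finset.range m, g k x) ^ p := by
    intro x
    rw [ENNReal.tsum_eq_iSup_nat]
    exact (ENNReal.orderIsoRpow p hp0).map_iSup _
  simp_rw [e]
  rw [lintegral_iSup (fun m => by fun_prop) (by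
    intro i j hij x
    simp only
    gcongr)]
  have e' := (ENNReal.orderIsoRpow (1 / p) (by positivity)).map_iSup
    fun m : ℕ => ∫⁻ x, (∑ k ∈ Finset.range m, g k x) ^ p
  simp only [ENNReal.orderIsoRpow_apply] at e'
  rw [e']
  exact iSup_le fun m => (hfin m).trans (ENNReal.sum_le_tsum _)

lemma measurable_iterate_MM {F : 𝔼 → ℝ≥0∞} (hF : Measurable F) (k : ℕ) :
    Measurable (MM^[k] F) := by
  cases k with
  | zero => exact hF
  | succ k => rw [Function.iterate_succ_apply']; exact measurable_MM _

lemma MM_pos {F : 𝔼 → ℝ≥0∞} (hF : ∫⁻ x, F x ≠ 0) (x : 𝔼) : MM F x ≠ 0 := by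
  intro h0
  have h1 : ∀ k : ℕ, (volume.withDensity F) (ball x ((k : ℝ) + 1)) = 0 := by
    intro k
    rw [withDensity_apply _ measurableSet_ball]
    have := lint_le_MM F x (ρ := (k : ℝ) + 1) (by positivity)
    rwa [h0, zero_mul, nonpos_iff_eq_zero] at this
  have h2 : (⋃ k : ℕ, ball x ((k : ℝ) + 1)) = univ := by
    refine eq_univ_of_forall fun y => mem_iUnion.2 ?_
    obtain ⟨k, hk⟩ := exists_nat_ge (dist y x)
    exact ⟨k, by rw [mem_ball]; linarith⟩
  have h3 := measure_iUnion_null h1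
  rw [h2, withDensity_apply _ MeasurableSet.univ, Measure.restrict_univ] at h3
  exact hF h3

/-- The Rubio de Francia algorithm: `u = ∑ M^k F / (2 A)^k` is an `A₁` majorant of `F` with norm
at most twice that of `F`. -/
lemma rubio_de_francia (hn : 0 < n) {F : 𝔼 → ℝ≥0∞} (hF : Measurable F) {p : ℝ} (hp : 1 < p)
    (h0 : ∫⁻ x, F x ^ p ≠ 0) (ht : ∫⁻ x, F x ^ p ≠ ∞) :
    ∃ u : 𝔼 → ℝ≥0∞, Measurable u ∧ (∀ x, u x ≠ 0) ∧ (∀ᵐ x, u x ≠ ∞) ∧ (∀ x, F x ≤ u x) ∧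
      (∀ x, MM u x ≤ (2 * opA n p) * u x) ∧ ∫⁻ x, u x ^ p ≤ 2 ^ p * ∫⁻ x, F x ^ p := by
  have hp0 : 0 < p := by linarith
  have hA0 := opA_ne_zero n hp
  have hAt := opA_ne_top n p
  set A := opA n p with hA
  set b : ℝ≥0∞ := (2 * A)⁻¹ with hb
  have h2A0 : 2 * A ≠ 0 := mul_ne_zero two_ne_zero hA0
  have h2At : 2 * A ≠ ∞ := ENNReal.mul_ne_top (by simp) hAt
  have hb0 : b ≠ 0 := ENNReal.inv_ne_zero.2 h2At
  have hit := measurable_iterate_MM hF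
  set u : 𝔼 → ℝ≥0∞ := fun x => ∑' k : ℕ, b ^ k * MM^[k] F x with hu
  have hum : Measurable u := by fun_prop
  have hnorm : ∀ k : ℕ, (∫⁻ x, (MM^[k] F x) ^ p) ^ (1 / p) ≤ A ^ k * (∫⁻ x, F x ^ p) ^ (1 / p) := by
    intro k
    induction k with
    | zero => simp
    | succ k ih =>
      rw [Function.iterate_succ_apply']
      refine (strong' hn (hit k) hp).trans ?_
      rw [pow_succ', mul_assoc]
      gcongr
  have hunorm : (∫⁻ x, u x ^ p) ^ (1 / p) ≤ 2 * (∫⁻ x, F x ^ p) ^ (1 / p) := by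
    refine (Lp_tsum_le hp.le fun k => by fun_prop).trans ?_
    calc ∑' k : ℕ, (∫⁻ x, (b ^ k * MM^[k] F x) ^ p) ^ (1 / p)
        ≤ ∑' k : ℕ, (2⁻¹ : ℝ≥0∞) ^ k * (∫⁻ x, F x ^ p) ^ (1 / p) := by
          refine ENNReal.tsum_le_tsum fun k => ?_
          have hp' : 0 ≤ 1 / p := by positivity
          simp_rw [ENNReal.mul_rpow_of_nonneg _ _ hp0.le]
          rw [lintegral_const_mul _ (by fun_prop), ENNReal.mul_rpow_of_nonneg _ _ hp',
            ← ENNReal.rpow_mul, mul_one_div_cancel hp0.ne', ENNReal.rpow_one]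
          calc b ^ k * (∫⁻ x, (MM^[k] F x) ^ p) ^ (1 / p)
              ≤ b ^ k * (A ^ k * (∫⁻ x, F x ^ p) ^ (1 / p)) := by gcongr; exact hnorm k
            _ = (b * A) ^ k * (∫⁻ x, F x ^ p) ^ (1 / p) := by rw [mul_pow]; ring
            _ = _ := by
              congr 2
              rw [hb, ENNReal.mul_inv (by simp) (by simp), mul_assoc,
                ENNReal.inv_mul_cancel hA0 hAt, mul_one]
      _ = _ := by
          rw [ENNReal.tsum_mul_right, ENNReal.tsum_geometric, ENNReal.one_sub_inv_two, inv_inv]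
  have hup : ∫⁻ x, u x ^ p ≤ 2 ^ p * ∫⁻ x, F x ^ p := by
    have h := ENNReal.rpow_le_rpow hunorm hp0.le
    rwa [ENNReal.mul_rpow_of_nonneg _ _ hp0.le, ← ENNReal.rpow_mul, ← ENNReal.rpow_mul,
      one_div_mul_cancel hp0.ne', ENNReal.rpow_one, ENNReal.rpow_one] at h
  have hterm : ∀ k x, b ^ k * MM^[k] F x ≤ u x := fun k x => ENNReal.le_tsum (f := fun k : ℕ =>
    b ^ k * MM^[k] F x) k
  have hF1 : ∫⁻ x, F x ≠ 0 := by
    intro h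
    rw [lintegral_eq_zero_iff hF] at h
    refine h0 ?_
    rw [lintegral_eq_zero_iff (by fun_prop)]
    filter_upwards [h] with x hx
    simp only [Pi.zero_apply] at hx ⊢
    rw [hx, ENNReal.zero_rpow_of_pos hp0]
  refine ⟨u, hum, fun x hx => ?_, ?_, fun x => ?_, fun x => ?_, hup⟩
  · have := hterm 1 x
    rw [hx, nonpos_iff_eq_zero, pow_one] at this
    exact mul_ne_zero hb0 (MM_pos hF1 x) this
  · have hfin : ∫⁻ x, u x ^ p ≠ ∞ := ne_top_of_le_ne_top (ENNReal.mul_ne_top (by simp) ht) hup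
    filter_upwards [ae_lt_top (by fun_prop) hfin] with x hx hx'
    rw [hx', ENNReal.top_rpow_of_pos hp0] at hx
    exact lt_irrefl _ hx
  · simpa using hterm 0 x
  · calc MM u x ≤ ∑' k : ℕ, MM (fun y => b ^ k * MM^[k] F y) x := MM_tsum (fun k => by fun_prop) x
      _ = ∑' k : ℕ, (2 * A) * (b ^ (k + 1) * MM^[k + 1] F x) := by
          refine tsum_congr fun k => ?_
          rw [MM_const_mul _ (hit k), Function.iterate_succ_apply', pow_succ', ← mul_assoc,
            ← mul_assoc, hb, ENNReal.mul_inv_cancel h2A0 h2At, one_mul]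
      _ = (2 * A) * ∑' k : ℕ, b ^ (k + 1) * MM^[k + 1] F x := ENNReal.tsum_mul_left
      _ ≤ (2 * A) * u x := by
          gcongr
          exact ENNReal.tsum_comp_le_tsum_of_injective (add_left_injective 1)
            (fun k : ℕ => b ^ k * MM^[k] F x)

/-! ### The vector-valued inequality -/

/-- The case `p ≤ r`: Hölder's inequality with the weight `u ^ (p - r)`, where `u` is an `A₁`
majorant of `(∑ f_k ^ r) ^ (1 / r)`. -/
lemma case_le (hn : 0 < n) {p r : ℝ} (hp : 1 < p) (hpr : p ≤ r) {f : ℕ → 𝔼 → ℝ≥0∞}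
    (hf : ∀ k, Measurable (f k)) :
    ∫⁻ x, (∑' k, MM (f k) x ^ r) ^ (p / r) ≤
      (4 * opA n r * opA n p) ^ p * ∫⁻ x, (∑' k, f k x ^ r) ^ (p / r) := by
  have hr : 1 < r := by linarith
  have hp0 : 0 < p := by linarith
  have hr0 : 0 < r := by linarith
  have hq0 : 0 < p / r := by positivity
  have hq1 : p / r ≤ 1 := (div_le_one hr0).2 hpr
  have hMm : ∀ k, Measurable (MM (f k)) := fun k => measurable_MM _
  set F : 𝔼 → ℝ≥0∞ := fun x => (∑' k, f k x ^ r) ^ (1 / r) with hF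
  have hFm : Measurable F := by fun_prop
  have hFp : ∀ x, (∑' k, f k x ^ r) ^ (p / r) = F x ^ p := by
    intro x
    rw [hF, ← ENNReal.rpow_mul]; congr 1; ring
  have hFr : ∀ x, ∑' k, f k x ^ r = F x ^ r := by
    intro x
    rw [hF, ← ENNReal.rpow_mul, one_div_mul_cancel hr0.ne', ENNReal.rpow_one]
  simp_rw [hFp]
  have hA0 := opA_ne_zero n hp
  have hB0 := opA_ne_zero n hr
  by_cases h0 : ∫⁻ x, F x ^ p = 0
  · rw [lintegral_eq_zero_iff (by fun_prop)] at h0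
    have hfk : ∀ k, f k =ᵐ[volume] fun _ => 0 := by
      intro k
      filter_upwards [h0] with x hx
      simp only [Pi.zero_apply, ENNReal.rpow_eq_zero_iff, hp0, not_lt_of_gt hp0, and_true,
        and_false, or_false] at hx
      have h1 := hFr x
      rw [hx, ENNReal.zero_rpow_of_pos hr0, ENNReal.tsum_eq_zero] at h1
      simpa [hr0, not_lt_of_gt hr0] using h1 k
    have hM0 : ∀ k x, MM (f k) x = 0 := by
      intro k x
      rw [MM_congr (hfk k) x]
      simp [MM]
    simp [hM0, hr0, hq0]
  by_cases ht : ∫⁻ x, F x ^ p = ∞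
  · rw [ht, ENNReal.mul_top]
    · exact le_top
    · refine (ENNReal.rpow_pos (pos_iff_ne_zero.2 (by simp [hA0, hB0])) ?_).ne'
      exact ENNReal.mul_ne_top (ENNReal.mul_ne_top (by simp) (opA_ne_top _ _)) (opA_ne_top _ _)
  obtain ⟨u, hum, hu0, hut, hFu, hMu, hup⟩ := rubio_de_francia hn hFm hp h0 ht
  set A := opA n p with hA
  set B := opA n r with hB
  have hAt : A ≠ ∞ := opA_ne_top _ _
  set v : 𝔼 → ℝ≥0∞ := fun x => u x ^ (-(r - p)) with hv
  have hvm : Measurable v := by fun_prop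
  have hw : ∀ k, ∫⁻ x, MM (f k) x ^ r * v x ≤ (B * (2 * A)) ^ r * ∫⁻ x, f k x ^ r * v x := by
    intro k
    have h := a1_strong hum (hf k) hu0 hut (K := 2 * A)
      ((one_le_opA n hp).trans (le_mul_of_one_le_left' one_le_two))
      (ENNReal.mul_ne_top (by simp) hAt) hMu (a := (r - p) / (r - 1))
      (div_nonneg (by linarith) (by linarith)) ((div_le_one (by linarith)).2 (by linarith)) hr
    rw [div_mul_cancel₀ _ (by linarith : r - 1 ≠ 0)] at h
    refine h.trans ?_
    rw [ENNReal.mul_rpow_of_nonneg B _ hr0.le]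
    gcongr
    exact const_le_opA' n hr
  have hsum : ∫⁻ x, (∑' k, MM (f k) x ^ r) * v x ≤ (B * (2 * A)) ^ r * ∫⁻ x, F x ^ p := by
    calc ∫⁻ x, (∑' k, MM (f k) x ^ r) * v x
        = ∑' k, ∫⁻ x, MM (f k) x ^ r * v x := by
          simp_rw [← ENNReal.tsum_mul_right]
          exact lintegral_tsum fun k => by fun_prop
      _ ≤ ∑' k, (B * (2 * A)) ^ r * ∫⁻ x, f k x ^ r * v x := ENNReal.tsum_le_tsum hw
      _ = (B * (2 * A)) ^ r * ∫⁻ x, (∑' k, f k x ^ r) * v x := by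
          rw [ENNReal.tsum_mul_left]
          simp_rw [← ENNReal.tsum_mul_right]
          rw [lintegral_tsum fun k => by fun_prop]
      _ ≤ _ := by
          gcongr (B * (2 * A)) ^ r * ?_
          refine lintegral_mono_ae ?_
          filter_upwards [hut] with x hx
          rw [hFr]
          calc F x ^ r * v x = F x ^ p * F x ^ (r - p) * v x := by
                rw [← ENNReal.rpow_add_of_nonneg _ _ hp0.le (by linarith)]
                congr 2; ring
            _ ≤ F x ^ p * u x ^ (r - p) * v x := by
                have := ENNReal.rpow_le_rpow (hFu x) (by linarith : 0 ≤ r - p)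
                gcongr
            _ = F x ^ p := by
                rw [mul_assoc, hv, ← ENNReal.rpow_add _ _ (hu0 x) hx]
                simp
  calc ∫⁻ x, (∑' k, MM (f k) x ^ r) ^ (p / r)
      = ∫⁻ x, ((∑' k, MM (f k) x ^ r) * v x) ^ (p / r) * (u x ^ p) ^ (1 - p / r) := by
        refine lintegral_congr_ae ?_
        filter_upwards [hut] with x hx
        rw [ENNReal.mul_rpow_of_nonneg _ _ hq0.le, mul_assoc, hv, ← ENNReal.rpow_mul,
          ← ENNReal.rpow_mul, ← ENNReal.rpow_add _ _ (hu0 x) hx]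
        have : -(r - p) * (p / r) + p * (1 - p / r) = 0 := by field_simp; ring
        rw [this]; simp
    _ ≤ (∫⁻ x, (∑' k, MM (f k) x ^ r) * v x) ^ (p / r) * (∫⁻ x, u x ^ p) ^ (1 - p / r) :=
        ENNReal.lintegral_mul_norm_pow_le (by fun_prop) (by fun_prop) hq0.le (by linarith) (by ring)
    _ ≤ ((B * (2 * A)) ^ r * ∫⁻ x, F x ^ p) ^ (p / r) * (2 ^ p * ∫⁻ x, F x ^ p) ^ (1 - p / r) := by
        have h1 := ENNReal.rpow_le_rpow hsum hq0.le
        have h2 := ENNReal.rpow_le_rpow hup (by linarith : 0 ≤ 1 - p / r)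
        gcongr
    _ = (B * (2 * A)) ^ p * (2 ^ p) ^ (1 - p / r) * ∫⁻ x, F x ^ p := by
        rw [ENNReal.mul_rpow_of_nonneg _ _ hq0.le,
          ENNReal.mul_rpow_of_nonneg _ _ (by linarith : 0 ≤ 1 - p / r), ← ENNReal.rpow_mul (B * _),
          mul_div_cancel₀ _ hr0.ne']
        have : (∫⁻ x, F x ^ p) = (∫⁻ x, F x ^ p) ^ (p / r) * (∫⁻ x, F x ^ p) ^ (1 - p / r) := by
          rw [← ENNReal.rpow_add _ _ h0 ht]; simp
        conv_rhs => rw [this]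
        ring
    _ ≤ (B * (2 * A)) ^ p * 2 ^ p * ∫⁻ x, F x ^ p := by
        gcongr
        rw [← ENNReal.rpow_mul]
        refine ENNReal.rpow_le_rpow_of_exponent_le one_le_two ?_
        nlinarith
    _ = _ := by
        rw [← ENNReal.mul_rpow_of_nonneg _ _ hp0.le]
        congr 2; ring

/-- The case `p > r`: the weighted inequality tested against `G ^ (p / r - 1)` for truncations of
`G = ∑ (M f_k) ^ r`. -/
lemma case_gt (hn : 0 < n) {p r : ℝ} (hr : 1 < r) (hpr : r < p) {f : ℕ → 𝔼 → ℝ≥0∞}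
    (hf : ∀ k, Measurable (f k)) :
    ∫⁻ x, (∑' k, MM (f k) x ^ r) ^ (p / r) ≤
      (opA n r ^ r * ENNReal.ofReal (2 * dimC n * (p / r))) ^ (p / r) *
        ∫⁻ x, (∑' k, f k x ^ r) ^ (p / r) := by
  have hr0 : 0 < r := by linarith
  have hMm : ∀ k, Measurable (MM (f k)) := fun k => measurable_MM _
  set q := p / r with hq
  have hq1 : 1 < q := (one_lt_div hr0).2 hpr
  have hq0 : 0 < q := by linarith
  set s := q / (q - 1) with hs
  have hconj : q.HolderConjugate s := Real.HolderConjugate.conjExponent hq1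
  have hs1 : 1 < s := hconj.symm.lt
  have hAs : ENNReal.ofReal (2 * dimC n * q) = opA n s := by
    rw [opA]
    congr 2
    have : q - 1 ≠ 0 := by linarith
    rw [hs]
    field_simp
    ring
  rw [hAs]
  set G : 𝔼 → ℝ≥0∞ := fun x => ∑' k, MM (f k) x ^ r with hG
  set Φ : 𝔼 → ℝ≥0∞ := fun x => ∑' k, f k x ^ r with hΦ
  have hGm : Measurable G := by fun_prop
  have hΦm : Measurable Φ := by fun_prop
  set H : ℕ → 𝔼 → ℝ≥0∞ := fun N => (ball 0 (N : ℝ)).indicator fun x => min (G x) N with hH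
  have hHm : ∀ N, Measurable (H N) := fun N =>
    Measurable.indicator (by fun_prop) measurableSet_ball
  have hHG : ∀ N x, H N x ≤ G x := fun N x => by
    simp only [hH]
    exact (indicator_le_self' (fun _ _ => zero_le) x).trans (min_le_left _ _)
  have hbound : ∀ N, ∫⁻ x, H N x ^ q ≤ (opA n r ^ r * opA n s) ^ q * ∫⁻ x, Φ x ^ q := by
    intro N
    set X := ∫⁻ x, H N x ^ q with hX
    have hXt : X ≠ ∞ := by
      have h1 : X ≤ ∫⁻ x, (ball (0 : 𝔼) (N : ℝ)).indicator (fun _ => (N : ℝ≥0∞) ^ q) x := by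
        refine lintegral_mono fun x => ?_
        by_cases hx : x ∈ ball (0 : 𝔼) (N : ℝ)
        · simp only [hH, indicator_of_mem hx]
          exact ENNReal.rpow_le_rpow (min_le_right _ _) hq0.le
        · simp [hH, indicator_of_notMem hx, hq0]
      rw [lintegral_indicator_const measurableSet_ball] at h1
      exact ne_top_of_le_ne_top (ENNReal.mul_ne_top
        (ENNReal.rpow_ne_top_of_nonneg hq0.le (by simp)) (vol_fin _ _)) h1
    by_cases hX0 : X = 0
    · rw [hX0]; exact zero_le
    set w : 𝔼 → ℝ≥0∞ := fun x => H N x ^ (q - 1) with hw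
    have hHN := hHm N
    have hwm : Measurable w := by fun_prop
    have hMw := measurable_MM w
    have hws : ∫⁻ x, w x ^ s = X := by
      refine lintegral_congr fun x => ?_
      rw [hw, ← ENNReal.rpow_mul, hs, mul_div_cancel₀]
      linarith
    have h1 : X ≤ opA n r ^ r * opA n s * (∫⁻ x, Φ x ^ q) ^ (1 / q) * X ^ (1 / s) := by
      calc X = ∫⁻ x, H N x * w x := by
            refine lintegral_congr fun x => ?_
            have : H N x ^ q = H N x ^ (1 : ℝ) * H N x ^ (q - 1) := by
              rw [← ENNReal.rpow_add_of_nonneg _ _ zero_le_one (by linarith)]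
              congr 1; ring
            rw [this, ENNReal.rpow_one]
        _ ≤ ∫⁻ x, G x * w x := by
            gcongr with x
            exact hHG N x
        _ = ∑' k, ∫⁻ x, MM (f k) x ^ r * w x := by
            simp_rw [hG, ← ENNReal.tsum_mul_right]
            exact lintegral_tsum fun k => by fun_prop
        _ ≤ ∑' k, opA n r ^ r * ∫⁻ x, f k x ^ r * MM w x := by
            refine ENNReal.tsum_le_tsum fun k => (weighted_strong hn (hf k) hwm hr).trans ?_
            gcongr
            exact const_le_opA n hr
        _ = opA n r ^ r * ∫⁻ x, (Φ * MM w) x := by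
            rw [ENNReal.tsum_mul_left]
            simp_rw [Pi.mul_apply, hΦ, ← ENNReal.tsum_mul_right]
            rw [lintegral_tsum fun k => by fun_prop]
        _ ≤ opA n r ^ r * ((∫⁻ x, Φ x ^ q) ^ (1 / q) * (∫⁻ x, MM w x ^ s) ^ (1 / s)) := by
            gcongr
            exact ENNReal.lintegral_mul_le_Lp_mul_Lq _ hconj hΦm.aemeasurable hMw.aemeasurable
        _ ≤ opA n r ^ r * ((∫⁻ x, Φ x ^ q) ^ (1 / q) * (opA n s * X ^ (1 / s))) := by
            gcongr
            rw [← hws]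
            exact strong' hn hwm hs1
        _ = _ := by ring
    have h2 : X ^ (1 / q) ≤ opA n r ^ r * opA n s * (∫⁻ x, Φ x ^ q) ^ (1 / q) := by
      have hXs0 : X ^ (1 / s) ≠ 0 := (ENNReal.rpow_pos (pos_iff_ne_zero.2 hX0) hXt).ne'
      have hXst : X ^ (1 / s) ≠ ∞ := ENNReal.rpow_ne_top_of_nonneg (by positivity) hXt
      refine (ENNReal.mul_le_mul_iff_left hXs0 hXst).1 ?_
      rw [← ENNReal.rpow_add _ _ hX0 hXt]
      have : 1 / q + 1 / s = 1 := by
        rw [one_div, one_div]; exact hconj.inv_add_inv_eq_one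
      rw [this, ENNReal.rpow_one]
      exact h1
    have h3 := ENNReal.rpow_le_rpow h2 hq0.le
    rwa [ENNReal.mul_rpow_of_nonneg _ _ hq0.le, ← ENNReal.rpow_mul, ← ENNReal.rpow_mul,
      one_div_mul_cancel hq0.ne', ENNReal.rpow_one, ENNReal.rpow_one] at h3
  have hsup : ∀ x, G x ^ q = ⨆ N, H N x ^ q := by
    intro x
    have e : G x = ⨆ N, H N x := by
      refine le_antisymm (le_of_forall_lt fun c hc => ?_) (iSup_le fun N => hHG N x)
      obtain ⟨N₁, hN₁⟩ := ENNReal.exists_nat_gt hc.ne_top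
      obtain ⟨N₂, hN₂⟩ := exists_nat_gt (dist x 0)
      refine lt_iSup_iff.2 ⟨max N₁ N₂, ?_⟩
      have hx : x ∈ ball (0 : 𝔼) ((max N₁ N₂ : ℕ) : ℝ) := by
        rw [mem_ball]
        exact hN₂.trans_le (by exact_mod_cast le_max_right _ _)
      simp only [hH]
      rw [indicator_of_mem hx]
      exact lt_min hc (hN₁.trans_le (by exact_mod_cast le_max_left _ _))
    rw [e]
    exact (ENNReal.orderIsoRpow q hq0).map_iSup _
  change ∫⁻ x, G x ^ q ≤ _ * ∫⁻ x, Φ x ^ q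
  simp_rw [hsup]
  rw [lintegral_iSup (fun N => by have := hHm N; fun_prop)]
  · exact iSup_le hbound
  · intro i j hij x
    refine ENNReal.rpow_le_rpow ?_ hq0.le
    have hij' : (i : ℝ) ≤ j := by exact_mod_cast hij
    by_cases hx : x ∈ ball (0 : 𝔼) (i : ℝ)
    · simp only [hH]
      rw [indicator_of_mem hx, indicator_of_mem (ball_subset_ball hij' hx)]
      gcongr
    · simp only [hH]
      rw [indicator_of_notMem hx]
      exact zero_le

end FS

/-- Fefferman–Stein vector-valued maximal inequality.
For `1 < r, p < ∞` and any sequence `{f_k}`,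
`‖(Σ_k (M f_k)^r)^{1/r}‖_{L^p} ≤ Cₙ A_{p,r} ‖(Σ_k |f_k|^r)^{1/r}‖_{L^p}` with
`A_{p,r} = (r/(r−1))(p + 1/(p−1))` and `Cₙ` depending only on the dimension `n`. -/
theorem fefferman_stein (n : ℕ) (hn : 0 < n) :
    ∃ Cn > (0:ℝ), ∀ p r : ℝ, 1 < p → 1 < r →
      ∀ f : ℕ → (EuclideanSpace ℝ (Fin n) → ℝ), (∀ k, Measurable (f k)) →
        (∫⁻ x : EuclideanSpace ℝ (Fin n),
            (∑' k : ℕ, (HLmax (f k) x) ^ r) ^ (p / r) ∂volume) ^ (1 / p) ≤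
          ENNReal.ofReal (Cn * (r / (r - 1) * (p + 1 / (p - 1)))) *
            (∫⁻ x : EuclideanSpace ℝ (Fin n),
              (∑' k : ℕ, (ENNReal.ofReal |f k x|) ^ r) ^ (p / r) ∂volume) ^ (1 / p) := by
  have hD := FS.one_le_dimC n
  refine ⟨16 * FS.dimC n ^ 2, by positivity, fun p r hp hr f hf => ?_⟩
  have hp0 : 0 < p := by linarith
  have hp1 : 0 < p - 1 := by linarith
  have hr0 : 0 < r := by linarith
  have hr1 : 0 < r - 1 := by linarith
  have hinv : 0 < 1 / (p - 1) := by positivity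
  have hrr : 0 < r / (r - 1) := by positivity
  have hp' : (0:ℝ) ≤ 1 / p := by positivity
  have hfm : ∀ k, Measurable fun x => ENNReal.ofReal |f k x| := fun k => by
    have := hf k
    exact ENNReal.measurable_ofReal.comp (continuous_abs.measurable.comp this)
  change (∫⁻ x : EuclideanSpace ℝ (Fin n),
    (∑' k : ℕ, (FS.MM (fun y => ENNReal.ofReal |f k y|) x) ^ r) ^ (p / r)) ^ (1 / p) ≤ _
  rcases le_or_gt p r with hpr | hpr
  · have h := ENNReal.rpow_le_rpow (FS.case_le hn hp hpr hfm) hp'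
    rw [ENNReal.mul_rpow_of_nonneg _ _ hp', ← ENNReal.rpow_mul, mul_one_div_cancel hp0.ne',
      ENNReal.rpow_one] at h
    refine h.trans ?_
    gcongr
    have h4 : (4 : ℝ≥0∞) = ENNReal.ofReal 4 := by simp
    rw [FS.opA, FS.opA, h4,
      ← ENNReal.ofReal_mul (by norm_num), ← ENNReal.ofReal_mul (by positivity)]
    refine ENNReal.ofReal_le_ofReal ?_
    have e : p / (p - 1) = 1 + 1 / (p - 1) := by field_simp; ring
    have : p / (p - 1) ≤ p + 1 / (p - 1) := by linarith
    calc 4 * (2 * FS.dimC n * (r / (r - 1))) * (2 * FS.dimC n * (p / (p - 1)))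
        = 16 * FS.dimC n ^ 2 * (r / (r - 1) * (p / (p - 1))) := by ring
      _ ≤ _ := by gcongr
  · have h := ENNReal.rpow_le_rpow (FS.case_gt hn hr hpr hfm) hp'
    rw [ENNReal.mul_rpow_of_nonneg _ _ hp', ← ENNReal.rpow_mul,
      show p / r * (1 / p) = 1 / r by field_simp,
      ENNReal.mul_rpow_of_nonneg _ _ (by positivity : 0 ≤ 1 / r), ← ENNReal.rpow_mul,
      mul_one_div_cancel hr0.ne', ENNReal.rpow_one] at h
    refine h.trans ?_
    gcongr
    have hq : 1 ≤ p / r := (one_le_div hr0).2 hpr.le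
    have h1 : 1 ≤ 2 * FS.dimC n * (p / r) := by nlinarith
    have h2 : (ENNReal.ofReal (2 * FS.dimC n * (p / r))) ^ (1 / r) ≤
        ENNReal.ofReal (2 * FS.dimC n * (p / r)) := by
      refine (ENNReal.rpow_le_rpow_of_exponent_le (ENNReal.one_le_ofReal.2 h1)
        ((div_le_one hr0).2 hr.le)).trans (ENNReal.rpow_one _).le
    refine (mul_le_mul_right h2 _).trans ?_
    rw [FS.opA, ← ENNReal.ofReal_mul (by positivity)]
    refine ENNReal.ofReal_le_ofReal ?_
    have h3 : p / r ≤ p + 1 / (p - 1) := (div_le_self hp0.le hr.le).trans (by linarith)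
    calc 2 * FS.dimC n * (r / (r - 1)) * (2 * FS.dimC n * (p / r))
        = 4 * FS.dimC n ^ 2 * (r / (r - 1) * (p / r)) := by ring
      _ ≤ 16 * FS.dimC n ^ 2 * (r / (r - 1) * (p + 1 / (p - 1))) := by
        gcongr
        norm_num

end
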